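/- Let H ≤ G be a subgroup of a finite group G. Suppose there exists n ∈ ℕ such that for all irreducible complex characters ψ, φ of G one has ⟨Res_H ψ, Res_H φ⟩_H ≤ n · ⟨ψ, φ⟩_G, where ⟨χ, χ'⟩_K = (1/|K|) Σ_{k∈K} χ(k) · conj(χ'(k)) is the usual inner product of class functions on a finite group K and Res_H denotes restriction of characters to H. Then H = G. (By Frobenius reciprocity this hypothesis is equivalent to the condition ⟨Ind_H^G Res_H ψ, φ⟩_G ≤ n · ⟨ψ, φ⟩_G, which expresses H-separability of ℂ[G] over ℂ[H].) -/

import Mathlib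

open CategoryTheory
open scoped ComplexOrder

/-- The usual inner product of class functions on a finite group `K`:
`⟨χ, χ'⟩_K = (1/|K|) ∑_{k ∈ K} χ(k) * conj(χ'(k))`. -/
noncomputable def charInner (K : Type*) [Group K] [Fintype K] (χ χ' : K → ℂ) : ℂ :=
  (Fintype.card K : ℂ)⁻¹ * ∑ k : K, χ k * (starRingEnd ℂ) (χ' k)

/-! Taking `W` trivial, the hypothesis says that an irreducible representation without nonzero
`G`-invariants has no nonzero `H`-invariants either. If `H ≠ G`, then the invariants of `k[G ⧸ H]`
form a proper subrepresentation, contained in some maximal one `U`, and the irreducible quotient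
`k[G ⧸ H] ⧸ U` contradicts this. Indeed the image of the coset `H` is fixed by `H`, and it is
nonzero because `H` generates `k[G ⧸ H]`. An irreducible representation with a nonzero invariant is
trivial, so if there were one in the quotient, all cosets would have the same image; as their sum
lies in `U`, the index times that image would vanish. -/

universe u v

section Subrepresentation

variable {k G V : Type*} [Monoid G] [AddCommGroup V]

/-- The correspondence between subrepresentations of the quotient by `U` and subrepresentations
containing `U`, given by taking preimages: the analogue of `Submodule.comapMkQRelIso`. -/
def subrepresentationQuotientOrderIso [Ring k] [Module k V] {ρ : Representation k G V}
    (U : Subrepresentation ρ) :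
    Subrepresentation (ρ.quotient U.toSubmodule U.apply_mem_toSubmodule) ≃o Set.Ici U where
  toFun σ :=
    ⟨⟨σ.toSubmodule.comap U.toSubmodule.mkQ, fun g _ hv => σ.apply_mem_toSubmodule g hv⟩,
      U.toSubmodule.le_comap_mkQ σ.toSubmodule⟩
  invFun τ :=
    { toSubmodule := τ.1.toSubmodule.map U.toSubmodule.mkQ
      apply_mem_toSubmodule := by
        rintro g _ ⟨v, hv, rfl⟩
        exact ⟨ρ g v, τ.1.apply_mem_toSubmodule g hv, rfl⟩ }
  left_inv σ := Subrepresentation.toSubmodule_injective <|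
    Submodule.map_comap_eq_of_surjective U.toSubmodule.mkQ_surjective σ.toSubmodule
  right_inv τ := Subtype.ext <| Subrepresentation.toSubmodule_injective <|
    (U.toSubmodule.comap_map_mkQ τ.1.toSubmodule).trans (sup_eq_right.2 τ.2)
  map_rel_iff' := (Submodule.comapMkQRelIso U.toSubmodule).map_rel_iff

theorem isCoatomic_subrepresentation [Ring k] [Module k V] [IsNoetherian k V]
    (ρ : Representation k G V) : IsCoatomic (Subrepresentation ρ) :=
  have : WellFoundedGT (Subrepresentation ρ) :=
    StrictMono.wellFoundedGT (f := Subrepresentation.toSubmodule) fun _ _ h => h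
  inferInstance

variable [Field k] [Module k V]

theorem isIrreducible_quotient_of_isCoatom {ρ : Representation k G V} {U : Subrepresentation ρ}
    (hU : IsCoatom U) : (ρ.quotient U.toSubmodule U.apply_mem_toSubmodule).IsIrreducible :=
  (subrepresentationQuotientOrderIso U).isSimpleOrder_iff.2
    (Set.isSimpleOrder_Ici_iff_isCoatom.2 hU)

theorem isIrreducible_of_finrank_eq_one (ρ : Representation k G V)
    (hV : Module.finrank k V = 1) : ρ.IsIrreducible :=
  have := (isSimpleModule_iff k V).1 (isSimpleModule_iff_finrank_eq_one.2 hV)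
  { exists_pair_ne := ⟨⊥, ⊤, fun h => bot_ne_top (congrArg Subrepresentation.toSubmodule h)⟩
    eq_bot_or_eq_top := fun σ => (eq_bot_or_eq_top σ.toSubmodule).imp
      (fun h => Subrepresentation.toSubmodule_injective h)
      (fun h => Subrepresentation.toSubmodule_injective h) }

end Subrepresentation

theorem fdRep_simple_of_isIrreducible {k : Type u} {G : Type v} {V : Type u} [Field k] [Monoid G]
    [AddCommGroup V] [Module k V] [FiniteDimensional k V] (ρ : Representation k G V)
    [ρ.IsIrreducible] : Simple (FDRep.of ρ) where
  mono_isIso_iff_nonzero f _ := by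
    let F := forget₂ (FDRep k G) (Rep k G)
    have surjective_iff : Function.Surjective (F.map f).hom ↔ IsIso f := by
      rw [← Rep.epi_iff_surjective]
      exact ⟨fun _ => have := isIso_of_mono_of_epi (F.map f); isIso_of_reflects_iso f F,
        fun _ => inferInstance⟩
    rw [← surjective_iff]
    constructor
    · rintro hsurj rfl
      have : Nontrivial V := IsSimpleModule.nontrivial (MonoidAlgebra k G) ρ.asModule
      obtain ⟨v, hv⟩ := exists_ne (0 : V)
      obtain ⟨w, hw⟩ := hsurj v
      exact hv hw.symm
    · intro hf
      have hFf : (F.map f).hom ≠ 0 := fun h => hf (F.map_injective (Rep.hom_ext h))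
      exact (Representation.IsIrreducible.surjective_or_eq_zero (ρ := ρ) _).resolve_right hFf

section Invariants

variable {k G V : Type*} [Group G] [AddCommGroup V]

/-- The vectors fixed by `G`, bundled as a subrepresentation so that they can be compared with
other subrepresentations. -/
noncomputable def invariantsSubrepresentation [CommRing k] [Module k V]
    (ρ : Representation k G V) : Subrepresentation ρ where
  toSubmodule := ρ.invariants
  apply_mem_toSubmodule g _ hv := (hv g).symm ▸ hv

theorem invariants_eq_bot_or_eq_top [Field k] [Module k V] (ρ : Representation k G V)
    [ρ.IsIrreducible] : ρ.invariants = ⊥ ∨ ρ.invariants = ⊤ :=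
  (eq_bot_or_eq_top (invariantsSubrepresentation ρ)).imp
    (congrArg Subrepresentation.toSubmodule) (congrArg Subrepresentation.toSubmodule)

end Invariants

section PermutationRepresentation

theorem module_finite_monoidAlgebra (k X : Type*) [Semiring k] [Finite X] :
    Module.Finite k (MonoidAlgebra k X) :=
  Module.Finite.equiv (MonoidAlgebra.coeffLinearEquiv k).symm

open MonoidAlgebra (single)
open Representation (ofMulAction)

variable {k G X : Type*}

theorem subrepresentation_eq_top_of_single_mem [Semiring k] [Monoid G] [MulAction G X]
    [MulAction.IsPretransitive G X] {U : Subrepresentation (ofMulAction k G X)} {x : X}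
    (hx : single x 1 ∈ U) : U = ⊤ := by
  have single_mem (y : X) (c : k) : single y c ∈ U.toSubmodule := by
    obtain ⟨g, rfl⟩ := MulAction.exists_smul_eq G x y
    simpa using U.toSubmodule.smul_mem c (U.apply_mem_toSubmodule g hx)
  refine eq_top_iff.2 fun f _ => ?_
  induction f using MonoidAlgebra.induction_linear with
  | zero => exact U.toSubmodule.zero_mem
  | add f g hf hg => exact U.toSubmodule.add_mem (hf trivial) (hg trivial)
  | single y c => exact single_mem y c

variable [Group G] [MulAction G X]

theorem sum_single_mem_invariants [CommRing k] [Fintype X] :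
    ∑ x : X, single x 1 ∈ (ofMulAction k G X).invariants := fun g => by
  simpa using Equiv.sum_comp (MulAction.toPerm g) fun x : X => (single x 1 : MonoidAlgebra k X)

variable [MulAction.IsPretransitive G X]

theorem invariantsSubrepresentation_ofMulAction_ne_top [CommRing k] [Nontrivial k]
    [Nontrivial X] : invariantsSubrepresentation (ofMulAction k G X) ≠ ⊤ := by
  obtain ⟨x, y, hxy⟩ := exists_pair_ne X
  obtain ⟨g, rfl⟩ := MulAction.exists_smul_eq G x y
  intro htop
  have hx : single x 1 ∈ invariantsSubrepresentation (ofMulAction k G X) := htop ▸ trivial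
  have hfixed : single (g • x) (1 : k) = single x 1 := by
    rw [← Representation.ofMulAction_single, hx g]
  exact hxy (MonoidAlgebra.single_left_injective one_ne_zero hfixed).symm

theorem exists_isCoatom_invariantsSubrepresentation_le [CommRing k] [IsNoetherianRing k]
    [Nontrivial k] [Finite X] [Nontrivial X] :
    ∃ U : Subrepresentation (ofMulAction k G X),
      IsCoatom U ∧ invariantsSubrepresentation (ofMulAction k G X) ≤ U := by
  have := module_finite_monoidAlgebra k X
  have := isCoatomic_subrepresentation (ofMulAction k G X)
  exact (eq_top_or_exists_le_coatom _).resolve_left invariantsSubrepresentation_ofMulAction_ne_top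

theorem invariants_quotient_ofMulAction_eq_bot [Field k] (hX : (Nat.card X : k) ≠ 0)
    {U : Subrepresentation (ofMulAction k G X)} (hU : IsCoatom U)
    (hle : invariantsSubrepresentation (ofMulAction k G X) ≤ U) :
    ((ofMulAction k G X).quotient U.toSubmodule U.apply_mem_toSubmodule).invariants = ⊥ := by
  have := isIrreducible_quotient_of_isCoatom hU
  refine (invariants_eq_bot_or_eq_top _).resolve_right fun htop => hU.1 ?_
  have sub_mem (x y : X) : single y 1 - single x 1 ∈ U.toSubmodule := by
    obtain ⟨g, rfl⟩ := MulAction.exists_smul_eq G x y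
    have hfixed := htop.ge (Submodule.mem_top (x := U.toSubmodule.mkQ (single x 1))) g
    simpa [Submodule.Quotient.eq] using! hfixed
  obtain ⟨⟨x⟩, _⟩ : Nonempty X ∧ Finite X :=
    Nat.card_pos_iff.1 (Nat.pos_of_ne_zero fun h => hX (by rw [h, Nat.cast_zero]))
  have := Fintype.ofFinite X
  have hcard : (Nat.card X : k) • single x 1 ∈ U.toSubmodule := by
    have := U.toSubmodule.sub_mem (hle sum_single_mem_invariants)
      (U.toSubmodule.sum_mem fun y (_ : y ∈ Finset.univ) => sub_mem x y)
    simpa [Nat.cast_smul_eq_nsmul] using this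
  exact subrepresentation_eq_top_of_single_mem ((U.toSubmodule.smul_mem_iff hX).1 hcard)

end PermutationRepresentation

section CharInner

theorem charInner_character_trivial {K V : Type*} [Group K] [Fintype K] [AddCommGroup V]
    [Module ℂ V] [FiniteDimensional ℂ V] (ρ : Representation ℂ K V) :
    charInner K ρ.character (Representation.trivial ℂ K ℂ).character =
      Module.finrank ℂ ρ.invariants := by
  have := invertibleOfNonzero (Nat.cast_ne_zero (R := ℂ).2 (Nat.card_pos (α := K)).ne')
  rw [← Representation.card_inv_mul_sum_char_eq_finrank]
  simp [charInner, Representation.character]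

theorem invariants_comp_subtype_eq_bot_of_charInner_le {G V : Type*} [Group G] [Fintype G]
    {H : Subgroup G} [Fintype H] [AddCommGroup V] [Module ℂ V] [FiniteDimensional ℂ V]
    {ρ : Representation ℂ G V} {c : ℂ}
    (hle : charInner H (fun h => ρ.character h)
      (fun h => (Representation.trivial ℂ G ℂ).character h) ≤
        c * charInner G ρ.character (Representation.trivial ℂ G ℂ).character)
    (hρ : ρ.invariants = ⊥) :
    Representation.invariants (ρ.comp H.subtype : Representation ℂ H V) = ⊥ := by
  rw [charInner_character_trivial, hρ, finrank_bot, Nat.cast_zero, mul_zero] at hle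
  have hrank := (charInner_character_trivial (ρ.comp H.subtype)).symm.trans_le hle
  exact Submodule.finrank_eq_zero.1 (by exact_mod_cast hrank.antisymm (Nat.cast_nonneg _))

end CharInner

/-- Since an infinite index is `0` by convention, `hindex` asks for a finite index that is
invertible in `k`. -/
theorem subgroup_eq_top_of_res_inner_le_general {k : Type u} {G : Type v} [Field k] [Group G]
    (H : Subgroup G) (hindex : (H.index : k) ≠ 0)
    (hH : ∀ (V : Type (max u v)) [AddCommGroup V] [Module k V] [FiniteDimensional k V]
      (ρ : Representation k G V) [ρ.IsIrreducible], ρ.invariants = ⊥ →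
        Representation.invariants (ρ.comp H.subtype : Representation k H V) = ⊥) :
    H = ⊤ := by
  by_contra hne
  have : Nontrivial (G ⧸ H) := QuotientGroup.nontrivial_iff.2 hne
  have : H.FiniteIndex := ⟨fun h => hindex (by rw [h, Nat.cast_zero])⟩
  have := module_finite_monoidAlgebra k (G ⧸ H)
  obtain ⟨U, hU, hle⟩ :=
    exists_isCoatom_invariantsSubrepresentation_le (k := k) (G := G) (X := G ⧸ H)
  have := isIrreducible_quotient_of_isCoatom hU
  let v : MonoidAlgebra k (G ⧸ H) := .single ((1 : G) : G ⧸ H) 1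
  have hfixed (h : H) : Representation.ofMulAction k G (G ⧸ H) h v = v := by
    rw [Representation.ofMulAction_single]
    congr 1
    simp [QuotientGroup.eq]
  have hmk : U.toSubmodule.mkQ v = 0 := by
    rw [← Submodule.mem_bot k, ← hH _ _ (invariants_quotient_ofMulAction_eq_bot hindex hU hle)]
    exact fun h => congrArg U.toSubmodule.mkQ (hfixed h)
  exact hU.1 (subrepresentation_eq_top_of_single_mem ((Submodule.Quotient.mk_eq_zero _).1 hmk))

/-- Let `H ≤ G` be a subgroup of a finite group `G`.  If there is an `n ∈ ℕ` such that
`⟨Res_H ψ, Res_H φ⟩_H ≤ n * ⟨ψ, φ⟩_G` for all irreducible complex characters `ψ, φ` of `G`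
(a reformulation, via Frobenius reciprocity, of the H-separability of `ℂ[G]` over `ℂ[H]`),
then `H = G`. -/
theorem subgroup_eq_top_of_res_inner_le {G : Type} [Group G] [Fintype G] (H : Subgroup G) [Fintype H]
    (hn : ∃ n : ℕ, ∀ (V W : FDRep ℂ G), Simple V → Simple W →
      charInner H (fun h => V.character h) (fun h => W.character h) ≤
        (n : ℂ) * charInner G V.character W.character) :
    H = ⊤ := by
  have := isIrreducible_of_finrank_eq_one (.trivial ℂ G ℂ) (Module.finrank_self ℂ)
  exact hn.elim fun n hn => subgroup_eq_top_of_res_inner_le_general H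
    (Nat.cast_ne_zero.2 H.index_ne_zero_of_finite) fun V _ _ _ ρ _ =>
      invariants_comp_subtype_eq_bot_of_charInner_le (hn (.of ρ) (.of (.trivial ℂ G ℂ))
        (fdRep_simple_of_isIrreducible _) (fdRep_simple_of_isIrreducible _))
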